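/- Let K ∈ ℝ, N ∈ (1,∞), let I = (a,b) ⊆ ℝ be an open interval, and let h : I → (0,∞) be locally Lipschitz; let D ⊆ I denote the (full Lebesgue measure) set of points where h is differentiable. Assume that for all x, y ∈ D with x < y one has (log h)′(x) − (log h)′(y) ≥ K·(y − x) + (1/(N−1))·∫_x^y ((log h)′(s))² ds. Then h is a CD(K,N) density on I. -/

import Mathlib

open Real MeasureTheory ENNReal

/-- The finite part of the distortion coefficient `σ_{K,N}^{(t)}(θ)`. -/
noncomputable def sigmaR (K N t θ : ℝ) : ℝ :=
  if 0 < K * θ ^ 2 then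
    Real.sin (t * θ * Real.sqrt (K / N)) / Real.sin (θ * Real.sqrt (K / N))
  else if K * θ ^ 2 = 0 ∨ N = 0 then t
  else Real.sinh (t * θ * Real.sqrt (-K / N)) / Real.sinh (θ * Real.sqrt (-K / N))

/-- The distortion coefficient `σ_{K,N}^{(t)}(θ)`, with value `+∞` when `K·θ² ≥ N·π²`. -/
noncomputable def sigmaE (K N t θ : ℝ) : ℝ≥0∞ :=
  if N * Real.pi ^ 2 ≤ K * θ ^ 2 then ⊤ else ENNReal.ofReal (sigmaR K N t θ)

/-- `h` is a `CD(K,N)` density on the interval `I ⊆ ℝ`: `h` is nonnegative on `I` and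
`h((1−t)x₀ + t x₁)^{1/(N−1)} ≥ σ_{K,N−1}^{(1−t)}(|x₁−x₀|)·h(x₀)^{1/(N−1)} +
σ_{K,N−1}^{(t)}(|x₁−x₀|)·h(x₁)^{1/(N−1)}` for all `x₀, x₁ ∈ I`, `t ∈ [0,1]`.
The inequality is formulated in `ℝ≥0∞` so that an infinite coefficient forces the
corresponding density value to vanish. -/
def IsCDDensity (K N : ℝ) (I : Set ℝ) (h : ℝ → ℝ) : Prop :=
  (∀ x ∈ I, 0 ≤ h x) ∧
  ∀ x₀ ∈ I, ∀ x₁ ∈ I, ∀ t ∈ Set.Icc (0:ℝ) 1,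
    sigmaE K (N - 1) (1 - t) |x₁ - x₀| * ENNReal.ofReal (h x₀ ^ (1 / (N - 1)))
      + sigmaE K (N - 1) t |x₁ - x₀| * ENNReal.ofReal (h x₁ ^ (1 / (N - 1)))
      ≤ ENNReal.ofReal (h ((1 - t) * x₀ + t * x₁) ^ (1 / (N - 1)))

/-!
Put `n = N - 1`, `κ = K / n` and `f = h ^ (1 / n)`. The hypothesis says that `u = (log f)'`
satisfies `u' ≤ -κ - u²` in the sense of distributions: adding to `u` a primitive of `κ + u²` gives
a nonincreasing function. Testing this inequality against `f φ` with `φ ≥ 0` cancels the quadratic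
term and leaves `∫ κ f φ ≤ ∫ f' φ'`, the weak form of `f'' + κ f ≤ 0`. For `φ` the Green's function
of `[x₀, x₁]` with pole `z`, integration by parts turns this into
`sn (x₁ - z) f x₀ + sn (z - x₀) f x₁ ≤ sn (x₁ - x₀) f z`, where `sn` is the generalized sine of
curvature `κ`. On an interval of length `π / √κ` the right-hand side vanishes, contradicting
positivity of `f`; so `K (x₁ - x₀)² < n π²`, and dividing by `sn (x₁ - x₀)` gives the claim.
-/

open Set Filter Topology

lemma intervalIntegrable_mul_of_bounded {f g : ℝ → ℝ} {a b C : ℝ}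
    (hg : IntervalIntegrable g volume a b)
    (hf : AEStronglyMeasurable f (volume.restrict (uIoc a b)))
    (hbound : ∀ᵐ s, s ∈ uIoc a b → |f s| ≤ C) :
    IntervalIntegrable (fun s => f s * g s) volume a b :=
  intervalIntegrable_iff.2
    (hg.def'.bdd_mul hf ((ae_restrict_iff' measurableSet_uIoc).2 hbound))

section Steklov

variable {m ψ : ℝ → ℝ} {a b ε s : ℝ}

/-- The Steklov average of `m` over `[s, s + ε]`, an absolutely continuous approximation of `m`. -/
noncomputable def steklovAverage (m : ℝ → ℝ) (ε s : ℝ) : ℝ :=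
  ε⁻¹ * ∫ r in s..s + ε, m r

namespace steklovAverage

lemma mem_Icc_of_antitone (hm : Antitone m) (hε : 0 < ε) :
    steklovAverage m ε s ∈ Icc (m (s + ε)) (m s) := by
  have hle : s ≤ s + ε := by linarith
  have hint : IntervalIntegrable m volume s (s + ε) := hm.intervalIntegrable
  have hlower := intervalIntegral.integral_mono_on hle intervalIntegrable_const hint
    fun r hr => hm hr.2
  have hupper := intervalIntegral.integral_mono_on hle hint intervalIntegrable_const
    fun r hr => hm hr.1
  simp only [intervalIntegral.integral_const, add_sub_cancel_left, smul_eq_mul] at hlower hupper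
  exact ⟨(le_inv_mul_iff₀ hε).2 hlower, (inv_mul_le_iff₀ hε).2 hupper⟩

lemma antitone (hm : Antitone m) (hε : 0 < ε) : Antitone (steklovAverage m ε) := by
  intro x y hxy
  have hshift (z : ℝ) : ∫ r in z..z + ε, m r = ∫ r in 0..ε, m (z + r) := by
    simp [intervalIntegral.integral_comp_add_left]
  simp only [steklovAverage, hshift]
  have hint (z : ℝ) : IntervalIntegrable (fun r => m (z + r)) volume 0 ε :=
    Antitone.intervalIntegrable fun _ _ h => hm (by gcongr)
  gcongr
  exact intervalIntegral.integral_mono_on hε.le (hint y) (hint x) fun r _ => hm (by gcongr)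

lemma absolutelyContinuousOnInterval (hm : ∀ x y, IntervalIntegrable m volume x y) :
    AbsolutelyContinuousOnInterval (steklovAverage m ε) a b := by
  have hprim (c : ℝ) : AbsolutelyContinuousOnInterval (fun s => ∫ r in a..s, m (r + c)) a b :=
    IntervalIntegrable.absolutelyContinuousOnInterval_intervalIntegral
      (by simpa using (hm (a + c) (b + c)).comp_add_right c) left_mem_uIcc
  have hconst : AbsolutelyContinuousOnInterval (fun _ => ∫ r in a..a + ε, m r) a b :=
    (LipschitzWith.const _).lipschitzOnWith.absolutelyContinuousOnInterval
  have hsplit : steklovAverage m ε = fun s => ε⁻¹ *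
      ((∫ r in a..s, m (r + ε)) - (∫ r in a..s, m (r + 0)) + ∫ r in a..a + ε, m r) := by
    funext s
    rw [steklovAverage, intervalIntegral.integral_comp_add_right,
      intervalIntegral.integral_comp_add_right, add_zero, add_zero,
      ← intervalIntegral.integral_interval_sub_left (hm a (s + ε)) (hm a s),
      ← intervalIntegral.integral_interval_sub_left (hm a (s + ε)) (hm a (a + ε))]
    ring
  rw [hsplit]
  exact (((hprim ε).sub (hprim 0)).add hconst).const_mul ε⁻¹

lemma tendsto_nhdsGT_zero (hm : Antitone m) (hs : ContinuousAt m s) :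
    Tendsto (fun ε => steklovAverage m ε s) (𝓝[>] 0) (𝓝 (m s)) := by
  have hshift : Tendsto (fun ε => m (s + ε)) (𝓝[>] 0) (𝓝 (m s)) :=
    hs.tendsto.comp (tendsto_nhdsWithin_of_tendsto_nhds
      ((continuous_const_add s).tendsto' 0 s (add_zero s)))
  refine tendsto_of_tendsto_of_tendsto_of_le_of_le' hshift tendsto_const_nhds ?_ ?_ <;>
    filter_upwards [self_mem_nhdsWithin] with ε hε
  exacts [(mem_Icc_of_antitone hm hε).1, (mem_Icc_of_antitone hm hε).2]

lemma abs_le_of_antitone (hm : Antitone m) (hε : ε ∈ Ioo 0 1) (hs : s ∈ Icc a b) :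
    |steklovAverage m ε s| ≤ max |m (b + 1)| |m a| := by
  have hmem := mem_Icc_of_antitone (s := s) hm hε.1
  have hlower : m (b + 1) ≤ m (s + ε) := hm (by linarith [hε.2, hs.2])
  exact abs_le_max_abs_abs (hlower.trans hmem.1) (hmem.2.trans (hm hs.1))

lemma tendsto_integral_mul {g : ℝ → ℝ} (hm : Antitone m) (hab : a ≤ b)
    (hg : IntervalIntegrable g volume a b) :
    Tendsto (fun ε => ∫ s in a..b, steklovAverage m ε s * g s) (𝓝[>] 0)
      (𝓝 (∫ s in a..b, m s * g s)) := by
  refine intervalIntegral.tendsto_integral_filter_of_dominated_convergence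
    (fun s => max |m (b + 1)| |m a| * |g s|) ?_ ?_ (hg.abs.const_mul _) ?_
  · filter_upwards [self_mem_nhdsWithin] with ε hε
    exact (antitone hm hε).measurable.aestronglyMeasurable.mul hg.def'.aestronglyMeasurable
  · filter_upwards [Ioo_mem_nhdsGT one_pos] with ε hε
    refine Eventually.of_forall fun s hs => ?_
    rw [uIoc_of_le hab] at hs
    rw [norm_mul, Real.norm_eq_abs, Real.norm_eq_abs]
    gcongr
    exact abs_le_of_antitone hm hε (Ioc_subset_Icc_self hs)
  · filter_upwards [hm.countable_not_continuousAt.ae_notMem volume] with s hs _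
    exact (tendsto_nhdsGT_zero hm (not_not.1 hs)).mul_const _

end steklovAverage

lemma integral_mul_deriv_nonneg_of_antitone_of_absolutelyContinuous {g : ℝ → ℝ} (hab : a ≤ b)
    (hg : Antitone g) (hgac : AbsolutelyContinuousOnInterval g a b)
    (hψ : AbsolutelyContinuousOnInterval ψ a b) (hψ_nonneg : ∀ s ∈ Icc a b, 0 ≤ ψ s)
    (hψa : ψ a = 0) (hψb : ψ b = 0) :
    0 ≤ ∫ s in a..b, g s * deriv ψ s := by
  rw [hgac.integral_mul_deriv_eq_deriv_mul hψ, hψa, hψb, mul_zero, mul_zero, sub_zero, zero_sub,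
    ← intervalIntegral.integral_neg]
  refine intervalIntegral.integral_nonneg hab fun s hs => neg_nonneg.2 ?_
  exact mul_nonpos_of_nonpos_of_nonneg hg.deriv_nonpos (hψ_nonneg s hs)

lemma integral_mul_deriv_nonneg_of_antitone (hab : a ≤ b) (hm : Antitone m)
    (hψ : AbsolutelyContinuousOnInterval ψ a b) (hψ_nonneg : ∀ s ∈ Icc a b, 0 ≤ ψ s)
    (hψa : ψ a = 0) (hψb : ψ b = 0) :
    0 ≤ ∫ s in a..b, m s * deriv ψ s := by
  refine ge_of_tendsto
    (steklovAverage.tendsto_integral_mul hm hab hψ.intervalIntegrable_deriv) ?_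
  filter_upwards [self_mem_nhdsWithin] with ε hε
  exact integral_mul_deriv_nonneg_of_antitone_of_absolutelyContinuous hab
    (steklovAverage.antitone hm hε)
    (steklovAverage.absolutelyContinuousOnInterval fun _ _ => hm.intervalIntegrable)
    hψ hψ_nonneg hψa hψb

end Steklov

section DistributionalInequality

variable {u ρ ψ : ℝ → ℝ} {a b C : ℝ} {S : Set ℝ}

lemma antitoneOn_add_primitive (hS : S ⊆ Icc a b) (hρ : IntervalIntegrable ρ volume a b)
    (hineq : ∀ x ∈ S, ∀ y ∈ S, x < y → ∫ s in x..y, ρ s ≤ u x - u y) :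
    AntitoneOn (fun s => u s + ∫ r in a..s, ρ r) S := by
  intro x hx y hy hxy
  rcases hxy.eq_or_lt with rfl | hlt
  · exact le_rfl
  have hρ' (z : ℝ) (hz : z ∈ S) : IntervalIntegrable ρ volume a z :=
    hρ.mono_set (uIcc_subset_uIcc_left (Icc_subset_uIcc (hS hz)))
  have hadd := intervalIntegral.integral_interval_sub_left (hρ' y hy) (hρ' x hx)
  linarith [hineq x hx y hy hlt]

lemma exists_antitone_ae_eq_sub_primitive (hS : S ⊆ Icc a b) (hS_ae : ∀ᵐ s, s ∈ Icc a b → s ∈ S)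
    (hu : ∀ s ∈ S, |u s| ≤ C) (hρ : IntervalIntegrable ρ volume a b)
    (hineq : ∀ x ∈ S, ∀ y ∈ S, x < y → ∫ s in x..y, ρ s ≤ u x - u y) :
    ∃ m : ℝ → ℝ, Antitone m ∧ ∀ᵐ s, s ∈ Icc a b → u s = m s - ∫ r in a..s, ρ r := by
  obtain ⟨B, hB⟩ := (hρ.absolutelyContinuousOnInterval_intervalIntegral left_mem_uIcc).exists_bound
  have hbound : ∀ s ∈ S, |u s + ∫ r in a..s, ρ r| ≤ C + B := fun s hs =>
    (abs_add_le _ _).trans (add_le_add (hu s hs) (hB s (Icc_subset_uIcc (hS hs))))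
  obtain ⟨m, hm, heq⟩ := (antitoneOn_add_primitive hS hρ hineq).exists_antitone_extension
    ⟨-(C + B), forall_mem_image.2 fun s hs => (abs_le.1 (hbound s hs)).1⟩
    ⟨C + B, forall_mem_image.2 fun s hs => (abs_le.1 (hbound s hs)).2⟩
  refine ⟨m, hm, ?_⟩
  filter_upwards [hS_ae] with s hs hmem
  exact eq_sub_of_add_eq (heq (hs hmem))

lemma integral_primitive_mul_deriv (hρ : IntervalIntegrable ρ volume a b)
    (hψ : AbsolutelyContinuousOnInterval ψ a b) (hψb : ψ b = 0) :
    ∫ s in a..b, (∫ r in a..s, ρ r) * deriv ψ s = -∫ s in a..b, ρ s * ψ s := by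
  have hR := hρ.absolutelyContinuousOnInterval_intervalIntegral left_mem_uIcc
  rw [hR.integral_mul_deriv_eq_deriv_mul hψ, hψb, intervalIntegral.integral_same, mul_zero,
    zero_mul, sub_zero, zero_sub, neg_inj]
  refine intervalIntegral.integral_congr_ae ?_
  filter_upwards [hρ.ae_hasDerivAt_integral] with s hs hmem
  rw [(hs (uIoc_subset_uIcc hmem) a left_mem_uIcc).deriv]

lemma integral_mul_le_integral_mul_deriv (hab : a ≤ b) (hS : S ⊆ Icc a b)
    (hS_ae : ∀ᵐ s, s ∈ Icc a b → s ∈ S) (hu : ∀ s ∈ S, |u s| ≤ C)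
    (hρ : IntervalIntegrable ρ volume a b)
    (hineq : ∀ x ∈ S, ∀ y ∈ S, x < y → ∫ s in x..y, ρ s ≤ u x - u y)
    (hψ : AbsolutelyContinuousOnInterval ψ a b) (hψ_nonneg : ∀ s ∈ Icc a b, 0 ≤ ψ s)
    (hψa : ψ a = 0) (hψb : ψ b = 0) :
    ∫ s in a..b, ρ s * ψ s ≤ ∫ s in a..b, u s * deriv ψ s := by
  obtain ⟨m, hm, hum⟩ := exists_antitone_ae_eq_sub_primitive hS hS_ae hu hρ hineq
  have hR := hρ.absolutelyContinuousOnInterval_intervalIntegral left_mem_uIcc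
  have hmψ : IntervalIntegrable (fun s => m s * deriv ψ s) volume a b :=
    intervalIntegrable_mul_of_bounded (C := max |m b| |m a|) hψ.intervalIntegrable_deriv
      hm.measurable.aestronglyMeasurable (Eventually.of_forall fun s hs => by
        rw [uIoc_of_le hab] at hs
        exact abs_le_max_abs_abs (hm hs.2) (hm hs.1.le))
  have hRψ : IntervalIntegrable (fun s => (∫ r in a..s, ρ r) * deriv ψ s) volume a b :=
    hψ.intervalIntegrable_deriv.continuousOn_mul hR.continuousOn
  calc ∫ s in a..b, ρ s * ψ s
    _ ≤ (∫ s in a..b, m s * deriv ψ s) + ∫ s in a..b, ρ s * ψ s :=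
        le_add_of_nonneg_left (integral_mul_deriv_nonneg_of_antitone hab hm hψ hψ_nonneg hψa hψb)
    _ = ∫ s in a..b, (m s * deriv ψ s - (∫ r in a..s, ρ r) * deriv ψ s) := by
        rw [intervalIntegral.integral_sub hmψ hRψ, integral_primitive_mul_deriv hρ hψ hψb,
          sub_neg_eq_add]
    _ = ∫ s in a..b, u s * deriv ψ s := by
        refine intervalIntegral.integral_congr_ae ?_
        filter_upwards [hum] with s hs hmem
        rw [hs (uIcc_of_le hab ▸ uIoc_subset_uIcc hmem), sub_mul]

end DistributionalInequality

section IntegratedRiccati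

variable {K n p : ℝ} {J J' : Set ℝ} {h : ℝ → ℝ}

lemma differentiableAt_rpow_const_iff {s : ℝ} (hpos : ∀ᶠ r in 𝓝 s, 0 < h r) (hp : p ≠ 0) :
    DifferentiableAt ℝ (fun r => h r ^ p) s ↔ DifferentiableAt ℝ h s := by
  refine ⟨fun hdiff => ?_, fun hdiff => hdiff.rpow_const (Or.inl hpos.self_of_nhds.ne')⟩
  have hne : h s ^ p ≠ 0 := (rpow_pos_of_pos hpos.self_of_nhds p).ne'
  refine (hdiff.rpow_const (p := p⁻¹) (Or.inl hne)).congr_of_eventuallyEq ?_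
  filter_upwards [hpos] with r hr
  rw [rpow_rpow_inv hr.le hp]

lemma logDeriv_rpow_const {s : ℝ} (hpos : ∀ᶠ r in 𝓝 s, 0 < h r) (hp : p ≠ 0) :
    logDeriv (fun r => h r ^ p) s = p * logDeriv h s := by
  have hs : 0 < h s := hpos.self_of_nhds
  rw [logDeriv_apply, logDeriv_apply]
  by_cases hdiff : DifferentiableAt ℝ h s
  · rw [deriv_rpow_const hdiff (Or.inl hs.ne'), rpow_sub_one hs.ne']
    have hne : h s ^ p ≠ 0 := (rpow_pos_of_pos hs p).ne'
    field_simp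
  · have hndiff := (differentiableAt_rpow_const_iff hpos hp).not.2 hdiff
    rw [deriv_zero_of_not_differentiableAt hdiff, deriv_zero_of_not_differentiableAt hndiff]
    simp

/-- The Riccati inequality `v' ≤ -K - v² / n` for the logarithmic derivative `v` of `h`, integrated
between any two points of differentiability of `h` in `J`. -/
def IntegratedRiccati (K n : ℝ) (J : Set ℝ) (h : ℝ → ℝ) : Prop :=
  ∀ x ∈ J, ∀ y ∈ J, DifferentiableAt ℝ h x → DifferentiableAt ℝ h y → x < y →
    K * (y - x) + (1 / n) * ∫ s in x..y, logDeriv h s ^ 2 ≤ logDeriv h x - logDeriv h y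

namespace IntegratedRiccati

lemma mono (hh : IntegratedRiccati K n J h) (hJ : J' ⊆ J) : IntegratedRiccati K n J' h :=
  fun x hx y hy => hh x (hJ hx) y (hJ hy)

lemma rpow (hh : IntegratedRiccati K n J h) (hJ : IsOpen J)
    (hJ_conn : J.OrdConnected) (hpos : ∀ s ∈ J, 0 < h s) (hp : 0 < p) :
    IntegratedRiccati (p * K) (p * n) J (fun s => h s ^ p) := by
  have hpos_nhds (s : ℝ) (hs : s ∈ J) : ∀ᶠ r in 𝓝 s, 0 < h r := by
    filter_upwards [hJ.mem_nhds hs] using hpos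
  have hlog (s : ℝ) (hs : s ∈ J) := logDeriv_rpow_const (hpos_nhds s hs) hp.ne'
  intro x hx y hy hdx hdy hxy
  rw [differentiableAt_rpow_const_iff (hpos_nhds x hx) hp.ne'] at hdx
  rw [differentiableAt_rpow_const_iff (hpos_nhds y hy) hp.ne'] at hdy
  have hint : ∫ s in x..y, logDeriv (fun r => h r ^ p) s ^ 2
      = p ^ 2 * ∫ s in x..y, logDeriv h s ^ 2 := by
    rw [← intervalIntegral.integral_const_mul]
    refine intervalIntegral.integral_congr fun s hs => ?_
    rw [hlog s (hJ_conn.uIcc_subset hx hy hs), mul_pow]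
  rw [hlog x hx, hlog y hy, hint]
  calc p * K * (y - x) + 1 / (p * n) * (p ^ 2 * ∫ s in x..y, logDeriv h s ^ 2)
    _ = p * (K * (y - x) + 1 / n * ∫ s in x..y, logDeriv h s ^ 2) := by field_simp
    _ ≤ p * (logDeriv h x - logDeriv h y) := by gcongr; exact hh x hx y hy hdx hdy hxy
    _ = p * logDeriv h x - p * logDeriv h y := mul_sub _ _ _

end IntegratedRiccati

end IntegratedRiccati

section WeakForm

variable {κ a b : ℝ} {f φ : ℝ → ℝ} {L : NNReal}

lemma exists_abs_logDeriv_le_of_lipschitzOnWith (hlip : LipschitzOnWith L f (Icc a b))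
    (hpos : ∀ s ∈ Icc a b, 0 < f s) : ∃ C, ∀ s ∈ Ioo a b, |logDeriv f s| ≤ C := by
  obtain ⟨B, hB⟩ := isCompact_Icc.exists_bound_of_continuousOn
    (hlip.continuousOn.inv₀ fun s hs => (hpos s hs).ne')
  refine ⟨L * B, fun s hs => ?_⟩
  rw [logDeriv_apply, div_eq_mul_inv, abs_mul]
  gcongr
  exacts [norm_deriv_le_of_lipschitzOn (Icc_mem_nhds hs.1 hs.2) hlip, hB s (Ioo_subset_Icc_self hs)]

lemma ae_mem_uIoc_imp_mem_Ioo (hab : a ≤ b) : ∀ᵐ s, s ∈ uIoc a b → s ∈ Ioo a b := by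
  filter_upwards [Measure.ae_ne volume b] with s hs hmem
  rw [uIoc_of_le hab] at hmem
  exact ⟨hmem.1, lt_of_le_of_ne hmem.2 hs⟩

lemma intervalIntegrable_logDeriv_sq (hab : a ≤ b) (hlip : LipschitzOnWith L f (Icc a b))
    (hpos : ∀ s ∈ Icc a b, 0 < f s) :
    IntervalIntegrable (fun s => logDeriv f s ^ 2) volume a b := by
  rw [← uIcc_of_le hab] at hlip
  have hlog : IntervalIntegrable (logDeriv f) volume a b :=
    hlip.absolutelyContinuousOnInterval.intervalIntegrable_deriv.mul_continuousOn
      (hlip.continuousOn.inv₀ fun s hs => (hpos s (uIcc_of_le hab ▸ hs)).ne')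
  rw [uIcc_of_le hab] at hlip
  obtain ⟨C, hC⟩ := exists_abs_logDeriv_le_of_lipschitzOnWith hlip hpos
  simp only [sq]
  refine intervalIntegrable_mul_of_bounded hlog hlog.def'.aestronglyMeasurable (C := C) ?_
  filter_upwards [ae_mem_uIoc_imp_mem_Ioo hab] with s hs hmem
  exact hC s (hs hmem)

lemma IntegratedRiccati.integral_add_logDeriv_sq_mul_le
    (hf : IntegratedRiccati κ 1 (Ioo a b) f) (hab : a ≤ b)
    (hlip : LipschitzOnWith L f (Icc a b)) (hpos : ∀ s ∈ Icc a b, 0 < f s) {ψ : ℝ → ℝ}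
    (hψ : AbsolutelyContinuousOnInterval ψ a b) (hψ_nonneg : ∀ s ∈ Icc a b, 0 ≤ ψ s)
    (hψa : ψ a = 0) (hψb : ψ b = 0) :
    ∫ s in a..b, (κ + logDeriv f s ^ 2) * ψ s ≤ ∫ s in a..b, logDeriv f s * deriv ψ s := by
  obtain ⟨C, hC⟩ := exists_abs_logDeriv_le_of_lipschitzOnWith hlip hpos
  have hint := intervalIntegrable_logDeriv_sq hab hlip hpos
  refine integral_mul_le_integral_mul_deriv (S := {s ∈ Ioo a b | DifferentiableAt ℝ f s}) hab
    (fun s hs => Ioo_subset_Icc_self hs.1) ?_ (fun s hs => hC s hs.1)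
    (intervalIntegrable_const.add hint) ?_ hψ hψ_nonneg hψa hψb
  · rw [← uIcc_of_le hab] at hlip
    filter_upwards [hlip.absolutelyContinuousOnInterval.ae_differentiableAt,
      Measure.ae_ne volume a, Measure.ae_ne volume b] with s hs hsa hsb hmem
    exact ⟨⟨hmem.1.lt_of_ne' hsa, hmem.2.lt_of_ne hsb⟩, hs (Icc_subset_uIcc hmem)⟩
  · rintro x ⟨hx, hdx⟩ y ⟨hy, hdy⟩ hxy
    have hsub : IntervalIntegrable (fun s => logDeriv f s ^ 2) volume x y :=
      hint.mono_set (uIcc_subset_uIcc (Icc_subset_uIcc (Ioo_subset_Icc_self hx))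
        (Icc_subset_uIcc (Ioo_subset_Icc_self hy)))
    rw [intervalIntegral.integral_add intervalIntegrable_const hsub,
      intervalIntegral.integral_const, smul_eq_mul, mul_comm]
    simpa using hf x hx y hy hdx hdy hxy

lemma intervalIntegrable_deriv_mul_deriv (hab : a ≤ b) (hlip : LipschitzOnWith L f (Icc a b))
    (hφ : AbsolutelyContinuousOnInterval φ a b) :
    IntervalIntegrable (fun s => deriv f s * deriv φ s) volume a b := by
  refine intervalIntegrable_mul_of_bounded (C := L) hφ.intervalIntegrable_deriv
    (aestronglyMeasurable_deriv _ _) ?_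
  filter_upwards [ae_mem_uIoc_imp_mem_Ioo hab] with s hs hmem
  exact norm_deriv_le_of_lipschitzOn (Icc_mem_nhds (hs hmem).1 (hs hmem).2) hlip

lemma IntegratedRiccati.integral_mul_le_integral_deriv_mul_deriv
    (hf : IntegratedRiccati κ 1 (Ioo a b) f) (hab : a ≤ b)
    (hlip : LipschitzOnWith L f (Icc a b)) (hpos : ∀ s ∈ Icc a b, 0 < f s)
    (hφ : AbsolutelyContinuousOnInterval φ a b) (hφ_nonneg : ∀ s ∈ Icc a b, 0 ≤ φ s)
    (hφa : φ a = 0) (hφb : φ b = 0) :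
    ∫ s in a..b, κ * (f s * φ s) ≤ ∫ s in a..b, deriv f s * deriv φ s := by
  have hfac : AbsolutelyContinuousOnInterval f a b :=
    (uIcc_of_le hab ▸ hlip).absolutelyContinuousOnInterval
  have hineq := hf.integral_add_logDeriv_sq_mul_le hab hlip hpos
    (ψ := fun s => f s * φ s) (hfac.mul hφ)
    (fun s hs => mul_nonneg (hpos s hs).le (hφ_nonneg s hs)) (by simp [hφa]) (by simp [hφb])
  have hquad : IntervalIntegrable (fun s => logDeriv f s ^ 2 * (f s * φ s)) volume a b :=
    (intervalIntegrable_logDeriv_sq hab hlip hpos).mul_continuousOn (hfac.mul hφ).continuousOn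
  have hlin : IntervalIntegrable (fun s => κ * (f s * φ s)) volume a b :=
    ((hfac.mul hφ).continuousOn.intervalIntegrable).const_mul κ
  have hderiv : IntervalIntegrable (fun s => deriv f s * deriv φ s) volume a b :=
    intervalIntegrable_deriv_mul_deriv hab hlip hφ
  have hleibniz : ∫ s in a..b, logDeriv f s * deriv (fun s => f s * φ s) s
      = ∫ s in a..b, (logDeriv f s ^ 2 * (f s * φ s) + deriv f s * deriv φ s) := by
    refine intervalIntegral.integral_congr_ae ?_
    filter_upwards [hfac.ae_differentiableAt, hφ.ae_differentiableAt] with s hdf hdφ hmem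
    have hs := uIoc_subset_uIcc hmem
    have hne : f s ≠ 0 := (hpos s (uIcc_of_le hab ▸ hs)).ne'
    rw [deriv_fun_mul (hdf hs) (hdφ hs), logDeriv_apply]
    field_simp
  simp only [add_mul] at hineq
  rw [hleibniz, intervalIntegral.integral_add hlin hquad,
    intervalIntegral.integral_add hquad hderiv] at hineq
  linarith

end WeakForm

section GeneralizedTrigonometry

variable {κ s : ℝ}

/-- The generalized sine of curvature `κ`: the solution of `p'' = -κ p`, `p 0 = 0`, `p' 0 = 1`. -/
noncomputable def genSin (κ s : ℝ) : ℝ :=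
  if 0 < κ then sin (√κ * s) / √κ
  else if κ < 0 then sinh (√(-κ) * s) / √(-κ)
  else s

/-- The generalized cosine of curvature `κ`, the derivative of `genSin κ`. -/
noncomputable def genCos (κ s : ℝ) : ℝ :=
  if 0 < κ then cos (√κ * s)
  else if κ < 0 then cosh (√(-κ) * s)
  else 1

lemma genSin_of_pos (hκ : 0 < κ) : genSin κ = fun s => sin (√κ * s) / √κ := by
  simp [funext_iff, genSin, hκ]

lemma genCos_of_pos (hκ : 0 < κ) : genCos κ = fun s => cos (√κ * s) := by
  simp [funext_iff, genCos, hκ]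

lemma genSin_of_neg (hκ : κ < 0) : genSin κ = fun s => sinh (√(-κ) * s) / √(-κ) := by
  simp [funext_iff, genSin, hκ, hκ.not_gt]

lemma genCos_of_neg (hκ : κ < 0) : genCos κ = fun s => cosh (√(-κ) * s) := by
  simp [funext_iff, genCos, hκ, hκ.not_gt]

lemma genSin_curvature_zero : genSin 0 = fun s => s := by simp [funext_iff, genSin]

lemma genCos_curvature_zero : genCos 0 = fun _ => 1 := by simp [funext_iff, genCos]

@[simp] lemma genSin_zero : genSin κ 0 = 0 := by simp [genSin]

@[simp] lemma genCos_zero : genCos κ 0 = 1 := by simp [genCos]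

lemma hasDerivAt_genSin (κ s : ℝ) : HasDerivAt (genSin κ) (genCos κ s) s := by
  have hmul (c : ℝ) : HasDerivAt (c * ·) c s := by simpa using (hasDerivAt_id s).const_mul c
  rcases lt_trichotomy κ 0 with hκ | rfl | hκ
  · rw [genSin_of_neg hκ, genCos_of_neg hκ]
    have hne : √(-κ) ≠ 0 := (sqrt_pos.2 (neg_pos.2 hκ)).ne'
    simpa [hne] using (hmul √(-κ)).sinh.div_const √(-κ)
  · rw [genSin_curvature_zero, genCos_curvature_zero]
    exact hasDerivAt_id' s
  · rw [genSin_of_pos hκ, genCos_of_pos hκ]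
    have hne : √κ ≠ 0 := (sqrt_pos.2 hκ).ne'
    simpa [hne] using (hmul √κ).sin.div_const √κ

lemma hasDerivAt_genCos (κ s : ℝ) : HasDerivAt (genCos κ) (-κ * genSin κ s) s := by
  have hmul (c : ℝ) : HasDerivAt (c * ·) c s := by simpa using (hasDerivAt_id s).const_mul c
  rcases lt_trichotomy κ 0 with hκ | rfl | hκ
  · rw [genCos_of_neg hκ, genSin_of_neg hκ, mul_div_left_comm,
      div_sqrt]
    exact (hmul √(-κ)).cosh
  · rw [genCos_curvature_zero, neg_zero, zero_mul]
    exact hasDerivAt_const s 1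
  · rw [genCos_of_pos hκ, genSin_of_pos hκ, neg_mul, mul_div_left_comm,
      div_sqrt, ← neg_mul]
    exact (hmul √κ).cos

lemma contDiff_genSin (κ : ℝ) : ContDiff ℝ 1 (genSin κ) := by
  have hderiv : deriv (genSin κ) = genCos κ := funext fun s => (hasDerivAt_genSin κ s).deriv
  refine contDiff_one_iff_deriv.2 ⟨fun s => (hasDerivAt_genSin κ s).differentiableAt, ?_⟩
  exact hderiv ▸ continuous_iff_continuousAt.2 fun s => (hasDerivAt_genCos κ s).continuousAt

lemma genSin_add (κ s t : ℝ) :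
    genSin κ (s + t) = genSin κ s * genCos κ t + genCos κ s * genSin κ t := by
  rcases lt_trichotomy κ 0 with hκ | rfl | hκ
  · simp only [genSin_of_neg hκ, genCos_of_neg hκ, mul_add, sinh_add]
    ring
  · simp only [genSin_curvature_zero, genCos_curvature_zero]
    ring
  · simp only [genSin_of_pos hκ, genCos_of_pos hκ, mul_add, sin_add]
    ring

lemma genCos_add (κ s t : ℝ) :
    genCos κ (s + t) = genCos κ s * genCos κ t - κ * (genSin κ s * genSin κ t) := by
  rcases lt_trichotomy κ 0 with hκ | rfl | hκ
  · have hne : √(-κ) ≠ 0 := (sqrt_pos.2 (neg_pos.2 hκ)).ne'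
    have hsq : √(-κ) ^ 2 = -κ := sq_sqrt (neg_pos.2 hκ).le
    simp only [genSin_of_neg hκ, genCos_of_neg hκ, mul_add, cosh_add]
    field_simp
    rw [hsq]
    ring
  · simp only [genSin_curvature_zero, genCos_curvature_zero]
    ring
  · have hne : √κ ≠ 0 := (sqrt_pos.2 hκ).ne'
    have hsq : √κ ^ 2 = κ := sq_sqrt hκ.le
    simp only [genSin_of_pos hκ, genCos_of_pos hκ, mul_add, cos_add]
    field_simp
    rw [hsq]
    ring

lemma genCos_sq_add_mul_genSin_sq (κ s : ℝ) : genCos κ s ^ 2 + κ * genSin κ s ^ 2 = 1 := by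
  rcases lt_trichotomy κ 0 with hκ | rfl | hκ
  · rw [genSin_of_neg hκ, genCos_of_neg hκ, div_pow, sq_sqrt (neg_pos.2 hκ).le, cosh_sq]
    have hne : κ ≠ 0 := hκ.ne
    field_simp
    ring
  · simp only [genSin_curvature_zero, genCos_curvature_zero]
    ring
  · rw [genSin_of_pos hκ, genCos_of_pos hκ, div_pow, sq_sqrt hκ.le, cos_sq']
    field_simp
    ring

-- Ptolemy's theorem for `a`, `b`, `c`, `d` placed on a curve of constant curvature.
lemma genSin_sub_mul_genSin_sub (κ a b c d : ℝ) :
    genSin κ (c - a) * genSin κ (d - b)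
      = genSin κ (b - a) * genSin κ (d - c) + genSin κ (c - b) * genSin κ (d - a) := by
  rw [show c - a = (b - a) + (c - b) by ring, show d - b = (c - b) + (d - c) by ring,
    show d - a = (b - a) + (c - b) + (d - c) by ring]
  simp only [genSin_add, genCos_add]
  linear_combination
    (genSin κ (b - a) * genSin κ (d - c)) * genCos_sq_add_mul_genSin_sq κ (c - b)

lemma genSin_pos (hs : 0 < s) (hlt : κ * s ^ 2 < π ^ 2) : 0 < genSin κ s := by
  rcases lt_trichotomy κ 0 with hκ | rfl | hκ
  · have hsqrt : 0 < √(-κ) := sqrt_pos.2 (neg_pos.2 hκ)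
    rw [genSin_of_neg hκ]
    exact div_pos (sinh_pos_iff.2 (by positivity)) hsqrt
  · rwa [genSin_curvature_zero]
  · have hsqrt : 0 < √κ := sqrt_pos.2 hκ
    rw [genSin_of_pos hκ]
    refine div_pos (sin_pos_of_pos_of_lt_pi (by positivity) ?_) hsqrt
    refine lt_of_pow_lt_pow_left₀ 2 pi_pos.le ?_
    rwa [mul_pow, sq_sqrt hκ.le]

lemma genSin_pi_div_sqrt (hκ : 0 < κ) : genSin κ (π / √κ) = 0 := by
  simp [genSin_of_pos hκ, mul_div_cancel₀ π (sqrt_pos.2 hκ).ne']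

lemma genSin_nonneg (hs : 0 ≤ s) (hle : κ * s ^ 2 ≤ π ^ 2) : 0 ≤ genSin κ s := by
  rcases hs.eq_or_lt with rfl | hs_pos
  · exact genSin_zero.ge
  rcases hle.lt_or_eq with hlt | heq
  · exact (genSin_pos hs_pos hlt).le
  have hκ : 0 < κ := pos_of_mul_pos_left (heq ▸ by positivity) (sq_nonneg s)
  have hs_eq : s = π / √κ := by
    rw [eq_div_iff (sqrt_pos.2 hκ).ne', ← sqrt_sq hs, ← sqrt_sq pi_pos.le, ← heq, mul_comm κ,
      sqrt_mul (sq_nonneg s)]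
  exact (hs_eq ▸ genSin_pi_div_sqrt hκ).ge

lemma genSin_nonneg_of_mem_Icc {θ : ℝ} (hθ : κ * θ ^ 2 ≤ π ^ 2) (hs : s ∈ Icc 0 θ) :
    0 ≤ genSin κ s := by
  refine genSin_nonneg hs.1 ?_
  rcases le_total κ 0 with hκ | hκ
  · exact (mul_nonpos_of_nonpos_of_nonneg hκ (sq_nonneg s)).trans (sq_nonneg π)
  · exact le_trans (by gcongr; exacts [hs.1, hs.2]) hθ

lemma sigmaR_eq_genSin_div {K n t θ : ℝ} (hn : 0 < n) (hθ : 0 < θ) :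
    sigmaR K n t θ = genSin (K / n) (t * θ) / genSin (K / n) θ := by
  have hθ2 : 0 < θ ^ 2 := by positivity
  rcases lt_trichotomy K 0 with hK | rfl | hK
  · have hκ : K / n < 0 := div_neg_of_neg_of_pos hK hn
    have hneg : K * θ ^ 2 < 0 := mul_neg_of_neg_of_pos hK hθ2
    rw [sigmaR, if_neg hneg.not_gt, if_neg (by simp [hneg.ne, hn.ne'])]
    simp only [genSin_of_neg hκ]
    rw [div_div_div_cancel_right₀ (sqrt_pos.2 (neg_pos.2 hκ)).ne', neg_div, mul_comm √_,
      mul_comm √_]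
  · simp [sigmaR, genSin_curvature_zero, hθ.ne']
  · have hκ : 0 < K / n := div_pos hK hn
    rw [sigmaR, if_pos (by positivity)]
    simp only [genSin_of_pos hκ]
    rw [div_div_div_cancel_right₀ (sqrt_pos.2 hκ).ne', mul_comm √_, mul_comm √_]

end GeneralizedTrigonometry

section ThreePoint

variable {κ a b x₀ z x₁ : ℝ} {f φ p p' : ℝ → ℝ} {L : NNReal}

lemma integral_deriv_mul_deriv_sub_eq (hab : a ≤ b) (hf : AbsolutelyContinuousOnInterval f a b)
    (hp : ∀ s, HasDerivAt p (p' s) s) (hp' : ∀ s, HasDerivAt p' (-κ * p s) s)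
    (hφ : EqOn φ p (Ioo a b)) :
    ∫ s in a..b, (deriv f s * deriv φ s - κ * (f s * φ s)) = f b * p' b - f a * p' a := by
  have hp_cont : Continuous p := continuous_iff_continuousAt.2 fun s => (hp s).continuousAt
  have hp'_deriv : deriv p' = fun s => -κ * p s := funext fun s => (hp' s).deriv
  have hp'_contDiff : ContDiff ℝ 1 p' := contDiff_one_iff_deriv.2
    ⟨fun s => (hp' s).differentiableAt, hp'_deriv ▸ hp_cont.const_mul (-κ)⟩
  rw [← hf.integral_deriv_mul_eq_sub hp'_contDiff.contDiffOn.absolutelyContinuousOnInterval]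
  refine intervalIntegral.integral_congr_ae ?_
  filter_upwards [ae_mem_uIoc_imp_mem_Ioo hab] with s hs hmem
  have hφ_deriv : deriv φ s = p' s :=
    (hφ.eventuallyEq_of_mem (Ioo_mem_nhds (hs hmem).1 (hs hmem).2)).deriv_eq.trans (hp s).deriv
  rw [hφ_deriv, hφ (hs hmem), hp'_deriv]
  ring

/-- Up to a positive factor, the Green's function with pole `z` of the Dirichlet problem for
`-φ'' - κ φ` on `[x₀, x₁]`. -/
noncomputable def greenHat (κ x₀ z x₁ s : ℝ) : ℝ :=
  min (genSin κ (s - x₀) * genSin κ (x₁ - z)) (genSin κ (x₁ - s) * genSin κ (z - x₀))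

namespace greenHat

lemma absolutelyContinuousOnInterval :
    AbsolutelyContinuousOnInterval (greenHat κ x₀ z x₁) a b := by
  have hsmooth : ContDiff ℝ 1 (genSin κ) := contDiff_genSin κ
  have hleft : ContDiff ℝ 1 fun s => genSin κ (s - x₀) * genSin κ (x₁ - z) := by fun_prop
  have hright : ContDiff ℝ 1 fun s => genSin κ (x₁ - s) * genSin κ (z - x₀) := by fun_prop
  have hlip : LocallyLipschitz (greenHat κ x₀ z x₁) :=
    hleft.locallyLipschitz.min hright.locallyLipschitz
  obtain ⟨L, hL⟩ := hlip.locallyLipschitzOn.exists_lipschitzOnWith_of_compact isCompact_uIcc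
  exact hL.absolutelyContinuousOnInterval

variable (hκ : κ * (x₁ - x₀) ^ 2 ≤ π ^ 2) (hz : z ∈ Icc x₀ x₁)
include hκ hz

lemma eqOn_left : EqOn (greenHat κ x₀ z x₁)
    (fun s => genSin κ (s - x₀) * genSin κ (x₁ - z)) (Icc x₀ z) := by
  intro s hs
  refine min_eq_left ?_
  have hptolemy := genSin_sub_mul_genSin_sub κ x₀ s z x₁
  have hzs : 0 ≤ genSin κ (z - s) := genSin_nonneg_of_mem_Icc hκ
    ⟨sub_nonneg.2 hs.2, sub_le_sub hz.2 hs.1⟩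
  have hx : 0 ≤ genSin κ (x₁ - x₀) := genSin_nonneg_of_mem_Icc hκ
    ⟨sub_nonneg.2 (hz.1.trans hz.2), le_rfl⟩
  linarith [mul_nonneg hzs hx]

lemma eqOn_right : EqOn (greenHat κ x₀ z x₁)
    (fun s => genSin κ (x₁ - s) * genSin κ (z - x₀)) (Icc z x₁) := by
  intro s hs
  refine min_eq_right ?_
  have hptolemy := genSin_sub_mul_genSin_sub κ x₀ z s x₁
  have hsz : 0 ≤ genSin κ (s - z) := genSin_nonneg_of_mem_Icc hκ
    ⟨sub_nonneg.2 hs.1, sub_le_sub hs.2 hz.1⟩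
  have hx : 0 ≤ genSin κ (x₁ - x₀) := genSin_nonneg_of_mem_Icc hκ
    ⟨sub_nonneg.2 (hz.1.trans hz.2), le_rfl⟩
  linarith [mul_nonneg hsz hx]

lemma nonneg {s : ℝ} (hs : s ∈ Icc x₀ x₁) : 0 ≤ greenHat κ x₀ z x₁ s := by
  have hleft {r : ℝ} (hr : r ∈ Icc x₀ x₁) : 0 ≤ genSin κ (r - x₀) :=
    genSin_nonneg_of_mem_Icc hκ ⟨sub_nonneg.2 hr.1, sub_le_sub_right hr.2 x₀⟩
  have hright {r : ℝ} (hr : r ∈ Icc x₀ x₁) : 0 ≤ genSin κ (x₁ - r) :=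
    genSin_nonneg_of_mem_Icc hκ ⟨sub_nonneg.2 hr.2, sub_le_sub_left hr.1 x₁⟩
  exact le_min (mul_nonneg (hleft hs) (hright hz)) (mul_nonneg (hright hs) (hleft hz))

lemma apply_left : greenHat κ x₀ z x₁ x₀ = 0 := by
  simp [eqOn_left hκ hz (left_mem_Icc.2 hz.1)]

lemma apply_right : greenHat κ x₀ z x₁ x₁ = 0 := by
  simp [eqOn_right hκ hz (right_mem_Icc.2 hz.2)]

lemma integral_deriv_mul_deriv_sub_eq_left (hf : AbsolutelyContinuousOnInterval f x₀ z) :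
    ∫ s in x₀..z, (deriv f s * deriv (greenHat κ x₀ z x₁) s - κ * (f s * greenHat κ x₀ z x₁ s))
      = (f z * genCos κ (z - x₀) - f x₀) * genSin κ (x₁ - z) := by
  rw [integral_deriv_mul_deriv_sub_eq (p' := fun s => genCos κ (s - x₀) * genSin κ (x₁ - z))
    hz.1 hf (fun s => ((hasDerivAt_genSin κ _).comp_sub_const s x₀).mul_const _)
    (fun s => (((hasDerivAt_genCos κ _).comp_sub_const s x₀).mul_const _).congr_deriv
      (mul_assoc _ _ _)) ((eqOn_left hκ hz).mono Ioo_subset_Icc_self), sub_self, genCos_zero]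
  ring

lemma integral_deriv_mul_deriv_sub_eq_right (hf : AbsolutelyContinuousOnInterval f z x₁) :
    ∫ s in z..x₁, (deriv f s * deriv (greenHat κ x₀ z x₁) s - κ * (f s * greenHat κ x₀ z x₁ s))
      = (f z * genCos κ (x₁ - z) - f x₁) * genSin κ (z - x₀) := by
  rw [integral_deriv_mul_deriv_sub_eq (p' := fun s => -genCos κ (x₁ - s) * genSin κ (z - x₀))
    hz.2 hf (fun s => ((hasDerivAt_genSin κ _).comp_const_sub x₁ s).mul_const _)
    (fun s => (((hasDerivAt_genCos κ _).comp_const_sub x₁ s).neg.mul_const _).congr_deriv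
      (by ring)) ((eqOn_right hκ hz).mono Ioo_subset_Icc_self), sub_self, genCos_zero]
  ring

end greenHat

lemma IntegratedRiccati.genSin_interpolation (hf : IntegratedRiccati κ 1 (Ioo x₀ x₁) f)
    (hlip : LipschitzOnWith L f (Icc x₀ x₁)) (hpos : ∀ s ∈ Icc x₀ x₁, 0 < f s)
    (hκ : κ * (x₁ - x₀) ^ 2 ≤ π ^ 2) (hz : z ∈ Icc x₀ x₁) :
    genSin κ (x₁ - z) * f x₀ + genSin κ (z - x₀) * f x₁ ≤ genSin κ (x₁ - x₀) * f z := by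
  have hx : x₀ ≤ x₁ := hz.1.trans hz.2
  have hac : AbsolutelyContinuousOnInterval f x₀ x₁ :=
    (uIcc_of_le hx ▸ hlip).absolutelyContinuousOnInterval
  have hhat : AbsolutelyContinuousOnInterval (greenHat κ x₀ z x₁) x₀ x₁ :=
    greenHat.absolutelyContinuousOnInterval
  have hderiv := intervalIntegrable_deriv_mul_deriv hx hlip hhat
  have hprod : IntervalIntegrable (fun s => κ * (f s * greenHat κ x₀ z x₁ s)) volume x₀ x₁ :=
    ((hac.mul hhat).continuousOn.intervalIntegrable).const_mul κ
  have hleft : uIcc x₀ z ⊆ uIcc x₀ x₁ := uIcc_subset_uIcc_left (Icc_subset_uIcc hz)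
  have hright : uIcc z x₁ ⊆ uIcc x₀ x₁ := uIcc_subset_uIcc_right (Icc_subset_uIcc hz)
  have hweak := hf.integral_mul_le_integral_deriv_mul_deriv hx hlip hpos hhat
    (fun s hs => greenHat.nonneg hκ hz hs) (greenHat.apply_left hκ hz) (greenHat.apply_right hκ hz)
  rw [← sub_nonneg, ← intervalIntegral.integral_sub hderiv hprod,
    ← intervalIntegral.integral_add_adjacent_intervals ((hderiv.sub hprod).mono_set hleft)
      ((hderiv.sub hprod).mono_set hright),
    greenHat.integral_deriv_mul_deriv_sub_eq_left hκ hz (hac.mono hleft),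
    greenHat.integral_deriv_mul_deriv_sub_eq_right hκ hz (hac.mono hright)] at hweak
  have hadd := genSin_add κ (x₁ - z) (z - x₀)
  rw [sub_add_sub_cancel] at hadd
  rw [hadd]
  linarith

lemma IntegratedRiccati.mul_sq_lt_pi_sq (hf : IntegratedRiccati κ 1 (Ioo x₀ x₁) f)
    (hlip : LipschitzOnWith L f (Icc x₀ x₁)) (hpos : ∀ s ∈ Icc x₀ x₁, 0 < f s) (hx : x₀ ≤ x₁) :
    κ * (x₁ - x₀) ^ 2 < π ^ 2 := by
  by_contra! hle
  have hκ : 0 < κ := pos_of_mul_pos_left (lt_of_lt_of_le (by positivity) hle) (sq_nonneg _)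
  set ℓ := π / √κ with hℓ
  have hℓ_pos : 0 < ℓ := div_pos pi_pos (sqrt_pos.2 hκ)
  have hℓ_sq : κ * ℓ ^ 2 = π ^ 2 := by
    rw [hℓ, div_pow, sq_sqrt hκ.le, mul_div_cancel₀ _ hκ.ne']
  have hy : x₀ + ℓ ≤ x₁ := by
    have hℓ_le : ℓ ≤ x₁ - x₀ := le_of_sq_le_sq (le_of_mul_le_mul_left (hℓ_sq ▸ hle) hκ)
      (sub_nonneg.2 hx)
    linarith
  have hsub : Icc x₀ (x₀ + ℓ) ⊆ Icc x₀ x₁ := Icc_subset_Icc_right hy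
  have hinterp := (hf.mono (Ioo_subset_Ioo_right hy)).genSin_interpolation (z := x₀ + ℓ / 2)
    (hlip.mono hsub) (fun s hs => hpos s (hsub hs)) (by simpa using hℓ_sq.le)
    ⟨by linarith, by linarith⟩
  rw [add_sub_cancel_left, add_sub_cancel_left, add_sub_add_left_eq_sub, _root_.sub_half,
    genSin_pi_div_sqrt hκ, zero_mul] at hinterp
  have hhalf : 0 < genSin κ (ℓ / 2) := genSin_pos (half_pos hℓ_pos) (by
    rw [div_pow, ← mul_div_assoc, hℓ_sq]
    linarith [pow_pos pi_pos 2])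
  have hleft := mul_pos hhalf (hpos x₀ (left_mem_Icc.2 hx))
  have hright := mul_pos hhalf (hpos (x₀ + ℓ) ⟨by linarith, hy⟩)
  linarith

end ThreePoint

section CDDensity

variable {K N n t x₀ x₁ : ℝ} {I : Set ℝ} {f h : ℝ → ℝ} {L : NNReal}

lemma sigmaR_nonneg {θ : ℝ} (hn : 0 < n) (hθ : 0 < θ) (hdiam : K / n * θ ^ 2 < π ^ 2)
    (ht : t ∈ Icc 0 1) : 0 ≤ sigmaR K n t θ := by
  rw [sigmaR_eq_genSin_div hn hθ]
  exact div_nonneg (genSin_nonneg_of_mem_Icc hdiam.le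
    ⟨mul_nonneg ht.1 hθ.le, mul_le_of_le_one_left hθ.le ht.2⟩) (genSin_pos hθ hdiam).le

lemma IntegratedRiccati.sigmaR_interpolation (hf : IntegratedRiccati (K / n) 1 (Ioo x₀ x₁) f)
    (hn : 0 < n) (hlip : LipschitzOnWith L f (Icc x₀ x₁)) (hpos : ∀ s ∈ Icc x₀ x₁, 0 < f s)
    (hx : x₀ < x₁) (ht : t ∈ Icc 0 1) :
    sigmaR K n (1 - t) (x₁ - x₀) * f x₀ + sigmaR K n t (x₁ - x₀) * f x₁
      ≤ f ((1 - t) * x₀ + t * x₁) := by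
  have hθ : 0 < x₁ - x₀ := sub_pos.2 hx
  have hdiam := hf.mul_sq_lt_pi_sq hlip hpos hx.le
  have hz : (1 - t) * x₀ + t * x₁ ∈ Icc x₀ x₁ :=
    convex_Icc x₀ x₁ (left_mem_Icc.2 hx.le) (right_mem_Icc.2 hx.le) (sub_nonneg.2 ht.2) ht.1
      (sub_add_cancel 1 t)
  have hinterp := hf.genSin_interpolation hlip hpos hdiam.le hz
  rw [show x₁ - ((1 - t) * x₀ + t * x₁) = (1 - t) * (x₁ - x₀) by ring,
    show (1 - t) * x₀ + t * x₁ - x₀ = t * (x₁ - x₀) by ring,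
    ← div_le_iff₀' (genSin_pos hθ hdiam)] at hinterp
  rwa [sigmaR_eq_genSin_div hn hθ, sigmaR_eq_genSin_div hn hθ, div_mul_eq_mul_div,
    div_mul_eq_mul_div, ← add_div]

lemma IntegratedRiccati.sigmaE_interpolation (hf : IntegratedRiccati (K / n) 1 (Ioo x₀ x₁) f)
    (hn : 0 < n) (hlip : LipschitzOnWith L f (Icc x₀ x₁)) (hpos : ∀ s ∈ Icc x₀ x₁, 0 < f s)
    (hx : x₀ < x₁) (ht : t ∈ Icc 0 1) :
    sigmaE K n (1 - t) (x₁ - x₀) * ENNReal.ofReal (f x₀)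
        + sigmaE K n t (x₁ - x₀) * ENNReal.ofReal (f x₁)
      ≤ ENNReal.ofReal (f ((1 - t) * x₀ + t * x₁)) := by
  have hdiam := hf.mul_sq_lt_pi_sq hlip hpos hx.le
  have hfinite : ¬n * π ^ 2 ≤ K * (x₁ - x₀) ^ 2 := by
    rwa [not_le, ← div_lt_iff₀' hn, mul_div_right_comm]
  have hσ₀ : 0 ≤ sigmaR K n (1 - t) (x₁ - x₀) :=
    sigmaR_nonneg hn (sub_pos.2 hx) hdiam ⟨sub_nonneg.2 ht.2, sub_le_self 1 ht.1⟩
  have hσ₁ : 0 ≤ sigmaR K n t (x₁ - x₀) := sigmaR_nonneg hn (sub_pos.2 hx) hdiam ht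
  have hf₀ : 0 ≤ f x₀ := (hpos x₀ (left_mem_Icc.2 hx.le)).le
  have hf₁ : 0 ≤ f x₁ := (hpos x₁ (right_mem_Icc.2 hx.le)).le
  rw [sigmaE, if_neg hfinite, sigmaE, if_neg hfinite, ← ENNReal.ofReal_mul hσ₀,
    ← ENNReal.ofReal_mul hσ₁, ← ENNReal.ofReal_add (mul_nonneg hσ₀ hf₀) (mul_nonneg hσ₁ hf₁)]
  exact ENNReal.ofReal_le_ofReal (hf.sigmaR_interpolation hn hlip hpos hx ht)

lemma sigmaE_zero (hn : 0 < n) : sigmaE K n t 0 = ENNReal.ofReal t := by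
  have hfinite : ¬n * π ^ 2 ≤ K * 0 ^ 2 := by
    rw [zero_pow two_ne_zero, mul_zero, not_le]
    positivity
  rw [sigmaE, if_neg hfinite]
  simp [sigmaR]

lemma isCDDensity_of_forall_lt (hN : 1 < N) (hnonneg : ∀ x ∈ I, 0 ≤ h x)
    (hlt : ∀ x₀ ∈ I, ∀ x₁ ∈ I, x₀ < x₁ → ∀ t ∈ Icc (0 : ℝ) 1,
      sigmaE K (N - 1) (1 - t) (x₁ - x₀) * ENNReal.ofReal (h x₀ ^ (1 / (N - 1)))
          + sigmaE K (N - 1) t (x₁ - x₀) * ENNReal.ofReal (h x₁ ^ (1 / (N - 1)))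
        ≤ ENNReal.ofReal (h ((1 - t) * x₀ + t * x₁) ^ (1 / (N - 1)))) :
    IsCDDensity K N I h := by
  refine ⟨hnonneg, fun x₀ hx₀ x₁ hx₁ t ht => ?_⟩
  have ht' : 1 - t ∈ Icc (0 : ℝ) 1 := ⟨sub_nonneg.2 ht.2, sub_le_self 1 ht.1⟩
  rcases lt_trichotomy x₀ x₁ with hx | rfl | hx
  · rw [abs_of_pos (sub_pos.2 hx)]
    exact hlt x₀ hx₀ x₁ hx₁ hx t ht
  · rw [_root_.sub_self, abs_zero, sigmaE_zero (sub_pos.2 hN), sigmaE_zero (sub_pos.2 hN),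
      ← add_mul, ← ENNReal.ofReal_add ht'.1 ht.1, ← add_mul, sub_add_cancel, ENNReal.ofReal_one,
      one_mul, one_mul]
  · have hswap := hlt x₁ hx₁ x₀ hx₀ hx (1 - t) ht'
    rw [_root_.sub_sub_cancel] at hswap
    rwa [abs_of_neg (sub_neg.2 hx), neg_sub, add_comm, add_comm ((1 - t) * x₀)]

lemma locallyLipschitzOn_rpow_const {p : ℝ} (hh : LocallyLipschitzOn I h)
    (hpos : ∀ x ∈ I, 0 < h x) : LocallyLipschitzOn I fun x => h x ^ p := by
  intro x hx
  obtain ⟨L, U, hU, hLip⟩ := hh hx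
  obtain ⟨L', V, hV, hLip'⟩ :=
    (contDiffAt_rpow_const_of_ne (n := 1) (p := p) (hpos x hx).ne').exists_lipschitzOnWith
  exact ⟨L' * L, U ∩ h ⁻¹' V, inter_mem hU (hh.continuousOn x hx hV),
    hLip'.comp (hLip.mono inter_subset_left) fun _ hy => hy.2⟩

theorem integrated_riccati_implies_cd_density_general (hI : I.OrdConnected) (hN : 1 < N)
    (hpos : ∀ x ∈ I, 0 < h x) (hlip : LocallyLipschitzOn I h)
    (hriccati : IntegratedRiccati K (N - 1) (interior I) h) : IsCDDensity K N I h := by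
  have hn : 0 < N - 1 := sub_pos.2 hN
  have hroot : IntegratedRiccati (K / (N - 1)) 1 (interior I) fun x => h x ^ (1 / (N - 1)) := by
    have hrpow := hriccati.rpow isOpen_interior hI.interior
      (fun x hx => hpos x (interior_subset hx)) (one_div_pos.2 hn)
    rwa [one_div_mul_eq_div, one_div_mul_cancel hn.ne'] at hrpow
  refine isCDDensity_of_forall_lt hN (fun x hx => (hpos x hx).le) fun x₀ hx₀ x₁ hx₁ hx t ht => ?_
  have hsub : Icc x₀ x₁ ⊆ I := hI.out hx₀ hx₁
  obtain ⟨L, hL⟩ := ((locallyLipschitzOn_rpow_const hlip hpos).mono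
    hsub).exists_lipschitzOnWith_of_compact isCompact_Icc
  exact (hroot.mono (interior_Icc (a := x₀) ▸ interior_mono hsub)).sigmaE_interpolation hn hL
    (fun s hs => rpow_pos_of_pos (hpos s (hsub hs)) _) hx ht

end CDDensity

theorem integrated_riccati_implies_cd_density (K N : ℝ) (hN : 1 < N) (a b : ℝ)
    (h : ℝ → ℝ) (hpos : ∀ x ∈ Set.Ioo a b, 0 < h x)
    (hlip : ∀ x ∈ Set.Ioo a b, ∃ r > (0:ℝ), Metric.ball x r ⊆ Set.Ioo a b ∧
      ∃ L : NNReal, LipschitzOnWith L h (Metric.ball x r))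
    (hriccati : ∀ x ∈ Set.Ioo a b, ∀ y ∈ Set.Ioo a b,
      DifferentiableAt ℝ h x → DifferentiableAt ℝ h y → x < y →
      K * (y - x) + (1 / (N - 1)) * ∫ s in x..y, (deriv h s / h s) ^ 2
        ≤ deriv h x / h x - deriv h y / h y) :
    IsCDDensity K N (Set.Ioo a b) h := by
  refine integrated_riccati_implies_cd_density_general ordConnected_Ioo hN hpos
    (fun x hx => ?_) ((interior_Ioo (a := a) (b := b)).symm ▸ hriccati)
  obtain ⟨r, hr, -, L, hL⟩ := hlip x hx
  exact ⟨L, Metric.ball x r, mem_nhdsWithin_of_mem_nhds (Metric.ball_mem_nhds x hr), hL⟩
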